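/- arXiv:2311.05806 — 2 statements merged into one kernel-verified Lean document; each statement's English description precedes it below -/
import Mathlib

section
/- Let n ≥ 3 and 0 < c ≤ b. Let V = (v_{ij}) be an n×n symmetric matrix in the class L_n(1/b, 1/c), i.e. v_{ii} = Σ_{j≠i} v_{ij} for every i and 1/b ≤ v_{ij} ≤ 1/c for all i ≠ j. Let S = diag(1/v_{11}, …, 1/v_{nn}), and for r ∈ {1, …, n−1} let V_{22} and S_{22} be the bottom-right (n−r)×(n−r) blocks of V and S. Then max{ ‖V^{-1} − S‖_max , ‖V_{22}^{-1} − S_{22}‖_max } ≤ (2b²/(c(n−1)²))·( n·b/(2(n−2)c) + 1/2 ), where ‖·‖_max is the maximum absolute entry norm. (Paper's Lemma 2.) -/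
open Finset

/-!
The residual `R = V₂₂⁻¹ - S₂₂` satisfies `V₂₂ R = 1 - V₂₂ S₂₂`, a matrix which vanishes on the
diagonal and whose other entries `-vᵢⱼ / vⱼⱼ` are small, so it suffices to bound a vector `x` in
terms of `V x` on the support of `x`, uniformly in that support. Diagonal dominance is not strict,
hence a single row is not enough. If `xᵢ = t` is an entry of largest absolute value, row `i` reads
`∑_{k ≠ i} vᵢₖ (t + xₖ) = (V x)ᵢ` and pushes all the other entries towards `-t`; if `xⱼ` is the
smallest of these, row `j` pushes all its other entries towards `t`. For `n ≥ 3` the two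
requirements conflict, because the sums of `t + xₖ` over `k ≠ i` and of `t - xₖ` over `k ≠ j` add
up to at least `2 (n - 2) t`.
-/

open scoped Matrix

lemma sum_erase_add_add_sum_erase_sub {α R : Type*} [Fintype α] [DecidableEq α] [CommRing R]
    (x : α → R) (t : R) (i j : α) :
    ∑ k ∈ univ.erase i, (t + x k) + ∑ k ∈ univ.erase j, (t - x k) =
      2 * ((Fintype.card α : R) - 1) * t - x i + x j := by
  simp only [sum_erase_eq_sub (mem_univ _), sum_add_distrib, sum_sub_distrib, sum_const, card_univ,
    nsmul_eq_mul]
  ring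

lemma mulVec_extend_zero {α β ι R : Type*} [Fintype α] [Fintype ι] [NonUnitalNonAssocSemiring R]
    (A : Matrix β α R) {e : ι → α} (he : Function.Injective e) (x : ι → R) :
    A *ᵥ Function.extend e x 0 = A.submatrix id e *ᵥ x := by
  funext i
  refine (Fintype.sum_of_injective e he _ _ (fun j hj => ?_) fun j => ?_).symm
  · rw [Function.extend_apply' _ _ _ hj, Pi.zero_apply, mul_zero]
  · exact congrArg (A i (e j) * ·) (he.extend_apply x 0 j).symm

/-- The class `L_n(m, M)`, for an arbitrary finite index type and without the symmetry condition:
each diagonal entry is the sum of the other entries of its row, and all off-diagonal entries lie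
between `m` and `M`. For symmetric `V` these are the signless Laplacians of the complete graph with
edge weights in `[m, M]`. -/
structure IsSignlessLaplacian {α K : Type*} [Fintype α] [DecidableEq α] [AddCommMonoid K] [LE K]
    (V : Matrix α α K) (m M : K) : Prop where
  diag_eq_sum : ∀ i, V i i = ∑ j ∈ univ.erase i, V i j
  le_apply : ∀ i j, i ≠ j → m ≤ V i j
  apply_le : ∀ i j, i ≠ j → V i j ≤ M

namespace IsSignlessLaplacian

lemma le {α K : Type*} [Fintype α] [DecidableEq α] [Nontrivial α] [AddCommMonoid K] [Preorder K]
    {V : Matrix α α K} {m M : K} (hV : IsSignlessLaplacian V m M) : m ≤ M := by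
  obtain ⟨i, j, hij⟩ := exists_pair_ne α
  exact (hV.le_apply i j hij).trans (hV.apply_le i j hij)

variable {α K : Type*} [Fintype α] [DecidableEq α] [Field K] [LinearOrder K]
  [IsStrictOrderedRing K] {V : Matrix α α K} {m M : K}

lemma card_sub_one_mul_le_diag (hV : IsSignlessLaplacian V m M) (i : α) :
    ((Fintype.card α : K) - 1) * m ≤ V i i := by
  rw [hV.diag_eq_sum, ← card_univ, ← cast_card_erase_of_mem (mem_univ i), ← nsmul_eq_mul]
  exact card_nsmul_le_sum _ _ _ fun k hk => hV.le_apply i k (ne_of_mem_erase hk).symm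

lemma diag_le_card_sub_one_mul (hV : IsSignlessLaplacian V m M) (i : α) :
    V i i ≤ ((Fintype.card α : K) - 1) * M := by
  rw [hV.diag_eq_sum, ← card_univ, ← cast_card_erase_of_mem (mem_univ i), ← nsmul_eq_mul]
  exact sum_le_card_nsmul _ _ _ fun k hk => hV.apply_le i k (ne_of_mem_erase hk).symm

lemma mul_sum_erase_add_le (hV : IsSignlessLaplacian V m M) {x : α → K} {t : K}
    (hx : ∀ k, 0 ≤ t + x k) (i : α) :
    m * ∑ k ∈ univ.erase i, (t + x k) ≤ V i i * (t - x i) + (V *ᵥ x) i := by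
  have hrow : (V *ᵥ x) i = V i i * x i + ∑ k ∈ univ.erase i, V i k * x k :=
    (add_sum_erase _ _ (mem_univ i)).symm
  calc m * ∑ k ∈ univ.erase i, (t + x k)
      ≤ ∑ k ∈ univ.erase i, V i k * (t + x k) := by
        rw [mul_sum]
        exact sum_le_sum fun k hk => mul_le_mul_of_nonneg_right
          (hV.le_apply i k (ne_of_mem_erase hk).symm) (hx k)
    _ = V i i * t + ∑ k ∈ univ.erase i, V i k * x k := by
        simp only [mul_add, sum_add_distrib, ← sum_mul, ← hV.diag_eq_sum]
    _ = V i i * (t - x i) + (V *ᵥ x) i := by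
        rw [hrow]
        ring

lemma mul_sum_erase_sub_le (hV : IsSignlessLaplacian V m M) {x : α → K} {t Y : K} {j : α}
    (hx : ∀ k, x k ≤ t) (hj : 0 ≤ t + x j) (hY : -Y ≤ (V *ᵥ x) j) :
    m * ∑ k ∈ univ.erase j, (t - x k) ≤ M * (((Fintype.card α : K) - 1) * (t + x j)) + Y := by
  have hx' (k : α) : 0 ≤ t + (-x) k := by simpa using hx k
  calc m * ∑ k ∈ univ.erase j, (t - x k)
      ≤ V j j * (t + x j) - (V *ᵥ x) j := by
        simpa only [Matrix.mulVec_neg, Pi.neg_apply, sub_neg_eq_add, ← sub_eq_add_neg] using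
          hV.mul_sum_erase_add_le hx' j
    _ ≤ ((Fintype.card α : K) - 1) * M * (t + x j) + Y := by
        linarith [mul_le_mul_of_nonneg_right (hV.diag_le_card_sub_one_mul j) hj]
    _ = M * (((Fintype.card α : K) - 1) * (t + x j)) + Y := by ring

section Stability

variable [Nontrivial α] {x : α → K} {Y : K}

lemma mul_apply_le_of_forall_abs_le (hV : IsSignlessLaplacian V m M) (hm : 0 < m) (hY : 0 ≤ Y)
    (hx : ∀ i, x i ≠ 0 → |(V *ᵥ x) i| ≤ Y) {i : α} (hmax : ∀ k, |x k| ≤ x i) :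
    2 * ((Fintype.card α : K) - 2) * m ^ 2 * x i ≤ Y * (2 * m + M) := by
  have hM : 0 < M := hm.trans_le hV.le
  rcases eq_or_ne (x i) 0 with hi | hi
  · rw [hi, mul_zero]
    positivity
  have hadd (k : α) : 0 ≤ x i + x k := by linarith [(abs_le.mp (hmax k)).1]
  have hsub (k : α) : x k ≤ x i := (le_abs_self _).trans (hmax k)
  set A := ∑ k ∈ univ.erase i, (x i + x k)
  have hA : m * A ≤ Y := by
    have hrow := hV.mul_sum_erase_add_le hadd i
    rw [sub_self, mul_zero, zero_add] at hrow
    exact hrow.trans (abs_le.mp (hx i hi)).2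
  obtain ⟨j, -, hjmin⟩ := exists_min_image (univ.erase i) x univ_nontrivial.erase_nonempty
  have hjA : ((Fintype.card α : K) - 1) * (x i + x j) ≤ A := by
    rw [← card_univ, ← cast_card_erase_of_mem (mem_univ i), ← nsmul_eq_mul]
    exact card_nsmul_le_sum _ _ _ fun k hk => add_le_add_right (hjmin k hk) _
  rcases eq_or_ne (x j) 0 with hj | hj
  · rw [hj, add_zero] at hjA
    calc 2 * ((Fintype.card α : K) - 2) * m ^ 2 * x i
        ≤ 2 * m * (m * (((Fintype.card α : K) - 1) * x i)) := by
          have := mul_nonneg (sq_nonneg m) ((abs_nonneg _).trans (hmax i))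
          linarith
      _ ≤ 2 * m * Y := by grw [hjA, hA]
      _ ≤ Y * (2 * m + M) := by linarith [mul_nonneg hY hM.le]
  set B := ∑ k ∈ univ.erase j, (x i - x k)
  have hB : m * B ≤ M * A + Y := by
    grw [← hjA]
    exact hV.mul_sum_erase_sub_le hsub (hadd j) (abs_le.mp (hx j hj)).1
  have hAB : 2 * ((Fintype.card α : K) - 2) * x i ≤ A + B := by
    linarith [sum_erase_add_add_sum_erase_sub x (x i) i j, hadd j]
  calc 2 * ((Fintype.card α : K) - 2) * m ^ 2 * x i
      = m ^ 2 * (2 * ((Fintype.card α : K) - 2) * x i) := by ring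
    _ ≤ m ^ 2 * (A + B) := by grw [hAB]
    _ = m * (m * A) + m * (m * B) := by ring
    _ ≤ m * (m * A) + m * (M * A + Y) := by grw [hB]
    _ = (m + M) * (m * A) + m * Y := by ring
    _ ≤ (m + M) * Y + m * Y := by grw [hA]
    _ = Y * (2 * m + M) := by ring

lemma mul_abs_apply_le (hV : IsSignlessLaplacian V m M) (hm : 0 < m) (hY : 0 ≤ Y)
    (hx : ∀ i, x i ≠ 0 → |(V *ᵥ x) i| ≤ Y) (k : α) :
    2 * ((Fintype.card α : K) - 2) * m ^ 2 * |x k| ≤ Y * (2 * m + M) := by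
  have hcard : (0 : K) ≤ Fintype.card α - 2 :=
    sub_nonneg.mpr (by exact_mod_cast Fintype.one_lt_card (α := α))
  obtain ⟨i, -, hi⟩ := exists_max_image univ (fun l => |x l|) ⟨k, mem_univ k⟩
  replace hi (l : α) : |x l| ≤ |x i| := hi l (mem_univ l)
  calc 2 * ((Fintype.card α : K) - 2) * m ^ 2 * |x k|
      ≤ 2 * ((Fintype.card α : K) - 2) * m ^ 2 * |x i| := by grw [hi k]
    _ ≤ Y * (2 * m + M) := ?_
  rcases abs_choice (x i) with h | h <;> rw [h] at hi ⊢
  · exact hV.mul_apply_le_of_forall_abs_le hm hY hx hi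
  · exact hV.mul_apply_le_of_forall_abs_le (x := -x) hm hY
      (by simpa [Matrix.mulVec_neg] using hx) (by simpa using hi)

end Stability

section Submatrix

variable {ι : Type*} [Fintype ι] {e : ι → α}

lemma mul_abs_apply_le_of_submatrix [Nontrivial α] (hV : IsSignlessLaplacian V m M) (hm : 0 < m)
    (he : Function.Injective e) {x : ι → K} {Y : K}
    (hx : ∀ i, |(V.submatrix e e *ᵥ x) i| ≤ Y) (k : ι) :
    2 * ((Fintype.card α : K) - 2) * m ^ 2 * |x k| ≤ Y * (2 * m + M) := by
  have hY : 0 ≤ Y := (abs_nonneg _).trans (hx k)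
  rw [← he.extend_apply x 0 k]
  refine hV.mul_abs_apply_le hm hY (fun i hi => ?_) (e k)
  by_cases hrange : ∃ a, e a = i
  · obtain ⟨a, rfl⟩ := hrange
    rw [mulVec_extend_zero V he]
    exact hx a
  · exact absurd (Function.extend_apply' _ _ _ hrange) hi

lemma isUnit_det_submatrix [DecidableEq ι] (hV : IsSignlessLaplacian V m M)
    (hα : 3 ≤ Fintype.card α) (hm : 0 < m) (he : Function.Injective e) :
    IsUnit (V.submatrix e e).det := by
  have : Nontrivial α := Fintype.one_lt_card_iff_nontrivial.mp (by lia)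
  have hα' : (3 : K) ≤ Fintype.card α := by exact_mod_cast hα
  have hpos : 0 < 2 * ((Fintype.card α : K) - 2) * m ^ 2 := mul_pos (by linarith) (pow_pos hm 2)
  rw [isUnit_iff_ne_zero, Ne, ← Matrix.exists_mulVec_eq_zero_iff]
  rintro ⟨x, hx0, hx⟩
  refine hx0 (funext fun k => ?_)
  have hk := hV.mul_abs_apply_le_of_submatrix (x := x) (Y := 0) hm he (by simp [hx]) k
  rw [zero_mul] at hk
  exact abs_nonpos_iff.mp (nonpos_of_mul_nonpos_right hk hpos)

lemma abs_one_sub_submatrix_mul_diagonal_le [DecidableEq ι] [Nontrivial α]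
    (hV : IsSignlessLaplacian V m M) (hm : 0 < m) (he : Function.Injective e) (i j : ι) :
    |(1 - V.submatrix e e * Matrix.diagonal fun l => 1 / V (e l) (e l)) i j| ≤
      M / (((Fintype.card α : K) - 1) * m) := by
  have hM : 0 ≤ M := hm.le.trans hV.le
  have hden : 0 < ((Fintype.card α : K) - 1) * m :=
    mul_pos (sub_pos.mpr (by exact_mod_cast Fintype.one_lt_card (α := α))) hm
  have hdiag : 0 < V (e j) (e j) := hden.trans_le (hV.card_sub_one_mul_le_diag _)
  rw [Matrix.sub_apply, Matrix.mul_diagonal, Matrix.submatrix_apply, mul_one_div]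
  rcases eq_or_ne i j with rfl | hij
  · rw [Matrix.one_apply_eq, div_self hdiag.ne', sub_self, abs_zero]
    exact div_nonneg hM hden.le
  · have hoff : 0 ≤ V (e i) (e j) := hm.le.trans (hV.le_apply _ _ (he.ne hij))
    rw [Matrix.one_apply_ne hij, zero_sub, abs_neg, abs_of_nonneg (div_nonneg hoff hdiag.le)]
    exact div_le_div₀ hM (hV.apply_le _ _ (he.ne hij)) hden (hV.card_sub_one_mul_le_diag _)

lemma abs_inv_submatrix_sub_diagonal_le [DecidableEq ι] (hV : IsSignlessLaplacian V m M)
    (hα : 3 ≤ Fintype.card α) (hm : 0 < m) (he : Function.Injective e) (i j : ι) :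
    |((V.submatrix e e)⁻¹ - Matrix.diagonal fun l => 1 / V (e l) (e l)) i j| ≤
      M * (2 * m + M) / (2 * ((Fintype.card α : K) - 1) * ((Fintype.card α : K) - 2) * m ^ 3) := by
  have : Nontrivial α := Fintype.one_lt_card_iff_nontrivial.mp (by lia)
  have hα' : (3 : K) ≤ Fintype.card α := by exact_mod_cast hα
  have hcard₁ : (0 : K) < Fintype.card α - 1 := by linarith
  have hcard₂ : (0 : K) < Fintype.card α - 2 := by linarith
  set R := (V.submatrix e e)⁻¹ - Matrix.diagonal fun l => 1 / V (e l) (e l) with hR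
  have hVR : V.submatrix e e * R =
      1 - V.submatrix e e * Matrix.diagonal fun l => 1 / V (e l) (e l) := by
    rw [hR, mul_sub, Matrix.mul_nonsing_inv _ (hV.isUnit_det_submatrix hα hm he)]
  have hcol (l : ι) : |(V.submatrix e e *ᵥ R.col j) l| ≤ M / (((Fintype.card α : K) - 1) * m) := by
    have hentry := hV.abs_one_sub_submatrix_mul_diagonal_le hm he l j
    rwa [← hVR] at hentry
  have hbound := hV.mul_abs_apply_le_of_submatrix hm he hcol i
  rw [← le_div_iff₀' (by positivity)] at hbound
  exact hbound.trans_eq (by field_simp)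

end Submatrix

end IsSignlessLaplacian

lemma inv_weight_bound_le {K : Type*} [Field K] [LinearOrder K] [IsStrictOrderedRing K]
    {b c n : K} (hc : 0 < c) (hcb : c ≤ b) (hn : 2 < n) :
    1 / c * (2 * (1 / b) + 1 / c) / (2 * (n - 1) * (n - 2) * (1 / b) ^ 3) ≤
      2 * b ^ 2 / (c * (n - 1) ^ 2) * (n * b / (2 * (n - 2) * c) + 1 / 2) := by
  have hb : 0 < b := hc.trans_le hcb
  have hn₁ : 0 < n - 1 := by linarith
  have hn₂ : 0 < n - 2 := by linarith
  calc 1 / c * (2 * (1 / b) + 1 / c) / (2 * (n - 1) * (n - 2) * (1 / b) ^ 3)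
      = b ^ 2 * ((n - 1) * (2 * c + b)) / (2 * c ^ 2 * (n - 1) ^ 2 * (n - 2)) := by
        field_simp [hn₂.ne']
    _ ≤ b ^ 2 * (2 * (n * b + (n - 2) * c)) / (2 * c ^ 2 * (n - 1) ^ 2 * (n - 2)) := by
        gcongr b ^ 2 * ?_ / _
        nlinarith
    _ = 2 * b ^ 2 / (c * (n - 1) ^ 2) * (n * b / (2 * (n - 2) * c) + 1 / 2) := by field_simp

theorem approx_inverse_beta_model_general {α ι K : Type*} [Fintype α] [DecidableEq α] [Fintype ι]
    [DecidableEq ι] [Field K] [LinearOrder K] [IsStrictOrderedRing K] {V : Matrix α α K} {b c : K}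
    {n : ℕ} (hα : Fintype.card α = n) (hn : 3 ≤ n) (hc : 0 < c) (hcb : c ≤ b)
    (hV : IsSignlessLaplacian V (1 / b) (1 / c)) {e : ι → α} (he : Function.Injective e) (i j : ι) :
    |((V.submatrix e e)⁻¹ - (Matrix.diagonal fun l => 1 / V l l).submatrix e e) i j| ≤
      2 * b ^ 2 / (c * ((n : K) - 1) ^ 2) * ((n : K) * b / (2 * ((n : K) - 2) * c) + 1 / 2) := by
  subst hα
  rw [Matrix.submatrix_diagonal _ _ he]
  exact (hV.abs_inv_submatrix_sub_diagonal_le hn (one_div_pos.mpr (hc.trans_le hcb)) he i j).trans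
    (inv_weight_bound_le hc hcb (by exact_mod_cast hn))

/-- **Paper's Lemma 2.** For `n ≥ 3`, `0 < c ≤ b` and a symmetric matrix `V` in the class
`L_n(1/b, 1/c)` (i.e. `V i i = ∑_{j ≠ i} V i j` and `1/b ≤ V i j ≤ 1/c` off the diagonal),
with `S = diag (1 / V i i)` and, for `r ∈ {1, …, n-1}`, `V₂₂` and `S₂₂` the bottom-right
`(n-r) × (n-r)` blocks of `V` and `S`, one has
`max {‖V⁻¹ - S‖_max, ‖V₂₂⁻¹ - S₂₂‖_max} ≤ (2b²/(c(n-1)²)) * (nb/(2(n-2)c) + 1/2)`,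
stated here entrywise. -/
theorem approx_inverse_beta_model
    (n : ℕ) (hn : 3 ≤ n) (b c : ℝ) (hc : 0 < c) (hcb : c ≤ b)
    (V : Matrix (Fin n) (Fin n) ℝ) (hVsymm : V.IsSymm)
    (hVdiag : ∀ i, V i i = ∑ j ∈ Finset.univ.erase i, V i j)
    (hVlb : ∀ i j, i ≠ j → 1 / b ≤ V i j)
    (hVub : ∀ i j, i ≠ j → V i j ≤ 1 / c)
    (S : Matrix (Fin n) (Fin n) ℝ) (hS : S = Matrix.diagonal fun i => 1 / V i i)
    (r : ℕ) (hr1 : 1 ≤ r) (hrn : r ≤ n - 1)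
    (e : Fin (n - r) → Fin n) (he : ∀ i, (e i : ℕ) = r + (i : ℕ)) :
    (∀ i j, |(V⁻¹ - S) i j| ≤
        2 * b ^ 2 / (c * ((n : ℝ) - 1) ^ 2) *
          ((n : ℝ) * b / (2 * ((n : ℝ) - 2) * c) + 1 / 2)) ∧
    (∀ i j, |((V.submatrix e e)⁻¹ - S.submatrix e e) i j| ≤
        2 * b ^ 2 / (c * ((n : ℝ) - 1) ^ 2) *
          ((n : ℝ) * b / (2 * ((n : ℝ) - 2) * c) + 1 / 2)) := by
  subst hS
  have hV : IsSignlessLaplacian V (1 / b) (1 / c) := ⟨hVdiag, hVlb, hVub⟩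
  have he_inj : Function.Injective e := fun i j hij => Fin.ext (by grind)
  have hn_card := Fintype.card_fin n
  exact ⟨approx_inverse_beta_model_general hn_card hn hc hcb hV Function.injective_id,
    approx_inverse_beta_model_general hn_card hn hc hcb hV he_inj⟩
end

section
/- Let r be a fixed positive integer. There is a constant C = C(r) such that for every n > r+2, every 0 < c ≤ b, and every V ∈ L_n(1/b, 1/c), writing S = diag(1/v_{11},…,1/v_{nn}), W = V^{-1} − S with bottom-right (n−r)×(n−r) block W_{22}, and W̃_{22} = V_{22}^{-1} − S_{22} (V_{22}, S_{22} the bottom-right (n−r)×(n−r) blocks of V, S), one has ‖W_{22} − W̃_{22}‖_max ≤ C·b⁶/(n³c⁵). (Paper's supplementary Lemma 10.) -/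
open Finset

/-!
Let `A` be row diagonally dominant of order `N` with off-diagonal entries in `[m, M]`, `0 < m`.

A vector `x` with `‖x‖_∞ = x i` has `(A x) i ≥ m ∑_{j ≠ i} (x i + x j)`, so if `A x` is small then
most entries of `x` are close to `-x i`; the row of the smallest entry says in the same way that
most entries are close to `x i`. Both can only hold if `x i` is small, and quantitatively
`‖x‖_∞ ≤ 5 M / (m² N) * ‖A x‖_∞`.

Hence `‖A⁻¹‖_max = O(1 / N)`. Deleting rows and columns perturbs a linear system by the deleted
entries of the solution times entries of size at most `M`. Deleting only index `l`, for which the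
reduced system for column `l` of `A⁻¹` is homogeneous, improves the bound to `O(1 / N²)` off the
diagonal. Deleting the first `r` indices then changes the inverse by `O(1 / N³)`, as the deleted
entries are off-diagonal entries of `A⁻¹`.
-/

section SumErase

variable {𝕜 ι : Type*} [Field 𝕜] [LinearOrder 𝕜] [IsStrictOrderedRing 𝕜]
  [Fintype ι] [DecidableEq ι]

theorem exists_ne_card_sub_one_mul_le_sum_erase [Nontrivial ι] (f : ι → 𝕜) (i : ι) :
    ∃ j ≠ i, (Fintype.card ι - 1) * f j ≤ ∑ k ∈ univ.erase i, f k := by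
  obtain ⟨j, hj, hmin⟩ := exists_min_image (univ.erase i) f (univ_nontrivial.erase_nonempty)
  refine ⟨j, ne_of_mem_erase hj, ?_⟩
  rw [← card_univ, ← cast_card_erase_of_mem (mem_univ i), ← nsmul_eq_mul]
  exact card_nsmul_le_sum _ _ _ hmin

theorem two_mul_card_sub_two_mul_le_sum_erase_add_sum_erase {x : ι → 𝕜} {X : 𝕜}
    (hX : ∀ k, |x k| ≤ X) (i j : ι) :
    2 * (Fintype.card ι - 2) * X ≤
      ∑ k ∈ univ.erase i, (X + x k) + ∑ k ∈ univ.erase j, (X - x k) := by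
  have hi := add_sum_erase univ (X + x ·) (mem_univ i)
  have hj := add_sum_erase univ (X - x ·) (mem_univ j)
  have htotal : ∑ k, (X + x k) + ∑ k, (X - x k) = 2 * Fintype.card ι * X := by
    rw [← sum_add_distrib]
    simp [← two_mul, mul_left_comm, mul_assoc]
  linarith [(abs_le.1 (hX i)).2, (abs_le.1 (hX j)).1]

end SumErase

open Matrix in
theorem mulVec_col_inv {R ι : Type*} [CommRing R] [Fintype ι] [DecidableEq ι]
    {A : Matrix ι ι R} (hA : IsUnit A.det) (l : ι) : A *ᵥ A⁻¹.col l = Pi.single l 1 := by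
  rw [← mulVec_single_one, mulVec_mulVec, mul_nonsing_inv _ hA, one_mulVec]

/-- Row diagonal dominance with off-diagonal entries in `[m, M]`. The paper's class `L_n(m, M)`
consists of the symmetric such matrices with equality in `sum_le_diag`; the inequality is what
passes to principal submatrices. -/
structure IsDiagDominantBetween {𝕜 ι : Type*} [AddCommMonoid 𝕜] [LE 𝕜] [Fintype ι] [DecidableEq ι]
    (A : Matrix ι ι 𝕜) (m M : 𝕜) : Prop where
  le_apply : ∀ i j, i ≠ j → m ≤ A i j
  apply_le : ∀ i j, i ≠ j → A i j ≤ M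
  sum_le_diag : ∀ i, ∑ j ∈ univ.erase i, A i j ≤ A i i

namespace IsDiagDominantBetween

open Matrix

variable {𝕜 ι σ : Type*} [Field 𝕜] [LinearOrder 𝕜]
  [Fintype ι] [DecidableEq ι] [Fintype σ] {A : Matrix ι ι 𝕜} {m M : 𝕜}

theorem lower_le_upper [Nontrivial ι] (hA : IsDiagDominantBetween A m M) : m ≤ M :=
  have ⟨i, j, hij⟩ := exists_pair_ne ι
  (hA.le_apply i j hij).trans (hA.apply_le i j hij)

variable [IsStrictOrderedRing 𝕜]

theorem submatrix [DecidableEq σ] (hA : IsDiagDominantBetween A m M) (hm : 0 ≤ m) {e : σ → ι}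
    (he : Function.Injective e) : IsDiagDominantBetween (A.submatrix e e) m M where
  le_apply i j hij := hA.le_apply _ _ (he.ne hij)
  apply_le i j hij := hA.apply_le _ _ (he.ne hij)
  sum_le_diag i := by
    calc ∑ j ∈ univ.erase i, A (e i) (e j)
        = ∑ k ∈ (univ.erase i).image e, A (e i) k := (sum_image he.injOn).symm
      _ ≤ ∑ k ∈ univ.erase (e i), A (e i) k := by
          refine sum_le_sum_of_subset_of_nonneg ?_ fun k hk _ =>
            hm.trans (hA.le_apply _ _ (ne_of_mem_erase hk).symm)
          rw [image_erase he]
          exact erase_subset_erase _ (subset_univ _)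
      _ ≤ A (e i) (e i) := hA.sum_le_diag (e i)

theorem sum_mul_add_le_mulVec (hA : IsDiagDominantBetween A m M) {x : ι → 𝕜} {i : ι}
    (hi : 0 ≤ x i) : ∑ j ∈ univ.erase i, A i j * (x i + x j) ≤ (A *ᵥ x) i := by
  calc ∑ j ∈ univ.erase i, A i j * (x i + x j)
      = (∑ j ∈ univ.erase i, A i j) * x i + ∑ j ∈ univ.erase i, A i j * x j := by
        simp only [mul_add, sum_add_distrib, sum_mul]
    _ ≤ A i i * x i + ∑ j ∈ univ.erase i, A i j * x j := by
        gcongr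
        exact hA.sum_le_diag i
    _ = (A *ᵥ x) i := add_sum_erase univ (fun j => A i j * x j) (mem_univ i)

theorem mul_sum_add_le (hA : IsDiagDominantBetween A m M) {x : ι → 𝕜} {X : 𝕜}
    (hX : ∀ k, |x k| ≤ X) {i : ι} (hi : 0 ≤ x i) :
    m * ∑ j ∈ univ.erase i, (X + x j) ≤
      (A *ᵥ x) i + M * ((Fintype.card ι - 1) * (X - x i)) := by
  have hcard : ((univ.erase i).card : 𝕜) = Fintype.card ι - 1 :=
    cast_card_erase_of_mem (mem_univ i)
  calc m * ∑ j ∈ univ.erase i, (X + x j)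
      ≤ ∑ j ∈ univ.erase i, (A i j * (x i + x j) + M * (X - x i)) := by
        rw [mul_sum]
        refine sum_le_sum fun j hj => ?_
        have hij := (ne_of_mem_erase hj).symm
        have hlow := mul_le_mul_of_nonneg_right (hA.le_apply i j hij)
          (neg_le_iff_add_nonneg'.1 (abs_le.1 (hX j)).1)
        have hupp := mul_le_mul_of_nonneg_right (hA.apply_le i j hij)
          (sub_nonneg.2 (abs_le.1 (hX i)).2)
        linarith
    _ = ∑ j ∈ univ.erase i, A i j * (x i + x j) + M * ((Fintype.card ι - 1) * (X - x i)) := by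
        rw [sum_add_distrib, sum_const, nsmul_eq_mul, hcard]
        ring
    _ ≤ (A *ᵥ x) i + M * ((Fintype.card ι - 1) * (X - x i)) := by
        gcongr
        exact hA.sum_mul_add_le_mulVec hi

theorem mul_sum_sub_le (hA : IsDiagDominantBetween A m M) {x : ι → 𝕜} {X : 𝕜}
    (hX : ∀ k, |x k| ≤ X) {i : ι} (hi : x i ≤ 0) :
    m * ∑ j ∈ univ.erase i, (X - x j) ≤
      -(A *ᵥ x) i + M * ((Fintype.card ι - 1) * (X + x i)) := by
  simpa [mulVec_neg, ← sub_eq_add_neg] using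
    hA.mul_sum_add_le (x := -x) (by simpa using hX) (i := i) (by simpa using hi)

theorem sq_mul_two_mul_card_sub_two_mul_apply_le [Nontrivial ι]
    (hA : IsDiagDominantBetween A m M) (hm : 0 ≤ m) {x : ι → 𝕜} {t : 𝕜}
    (ht : ∀ i, |(A *ᵥ x) i| ≤ t) {i : ι} (hi : ∀ k, |x k| ≤ x i) :
    m ^ 2 * (2 * (Fintype.card ι - 2) * x i) ≤ 3 * (M * t) := by
  have hx : 0 ≤ x i := (abs_nonneg _).trans (hi i)
  have ht₀ : 0 ≤ t := (abs_nonneg _).trans (ht i)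
  have hmM : m ≤ M := hA.lower_le_upper
  have hmt : m * t ≤ M * t := mul_le_mul_of_nonneg_right hmM ht₀
  have hrow_i : m * ∑ k ∈ univ.erase i, (x i + x k) ≤ t := by
    have h := hA.mul_sum_add_le hi hx
    rw [sub_self, mul_zero, mul_zero, add_zero] at h
    exact h.trans (abs_le.1 (ht i)).2
  obtain ⟨j, -, hj⟩ := exists_ne_card_sub_one_mul_le_sum_erase (x i + x ·) i
  have hgap : m * ((Fintype.card ι - 1) * (x i + x j)) ≤ t :=
    (mul_le_mul_of_nonneg_left hj hm).trans hrow_i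
  rcases le_total 0 (x j) with hxj | hxj
  · have hcard : (1 : 𝕜) ≤ Fintype.card ι := by exact_mod_cast Fintype.card_pos
    calc m ^ 2 * (2 * (Fintype.card ι - 2) * x i)
        ≤ m ^ 2 * (2 * ((Fintype.card ι - 1) * (x i + x j))) := by
          refine mul_le_mul_of_nonneg_left ?_ (sq_nonneg m)
          linarith [mul_nonneg (sub_nonneg.2 hcard) hxj]
      _ = 2 * (m * (m * ((Fintype.card ι - 1) * (x i + x j)))) := by ring
      _ ≤ 2 * (m * t) := by gcongr
      _ ≤ 3 * (M * t) := by linarith [mul_nonneg hm ht₀]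
  · have hrow_j : m * ∑ k ∈ univ.erase j, (x i - x k) ≤
        t + M * ((Fintype.card ι - 1) * (x i + x j)) := by
      linarith [hA.mul_sum_sub_le hi hxj, (abs_le.1 (ht j)).1]
    calc m ^ 2 * (2 * (Fintype.card ι - 2) * x i)
        ≤ m ^ 2 * (∑ k ∈ univ.erase i, (x i + x k) + ∑ k ∈ univ.erase j, (x i - x k)) := by
          gcongr
          exact two_mul_card_sub_two_mul_le_sum_erase_add_sum_erase hi i j
      _ = m * (m * ∑ k ∈ univ.erase i, (x i + x k) +
            m * ∑ k ∈ univ.erase j, (x i - x k)) := by ring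
      _ ≤ m * (t + (t + M * ((Fintype.card ι - 1) * (x i + x j)))) := by gcongr
      _ = 2 * (m * t) + M * (m * ((Fintype.card ι - 1) * (x i + x j))) := by ring
      _ ≤ 3 * (M * t) := by linarith [mul_le_mul_of_nonneg_left hgap (hm.trans hmM)]

theorem apply_le_of_abs_mulVec_le (hA : IsDiagDominantBetween A m M) (hm : 0 < m)
    (hcard : 3 ≤ Fintype.card ι) {x : ι → 𝕜} {t : 𝕜} (ht : ∀ i, |(A *ᵥ x) i| ≤ t)
    {i : ι} (hi : ∀ k, |x k| ≤ x i) :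
    x i ≤ 5 * M / (m ^ 2 * Fintype.card ι) * t := by
  have : Nontrivial ι := Fintype.one_lt_card_iff_nontrivial.1 (by lia)
  have hN : (3 : 𝕜) ≤ Fintype.card ι := by exact_mod_cast hcard
  have hx : 0 ≤ m ^ 2 * x i := mul_nonneg (sq_nonneg m) ((abs_nonneg _).trans (hi i))
  have hMt : 0 ≤ M * t :=
    mul_nonneg (hm.le.trans hA.lower_le_upper) ((abs_nonneg _).trans (ht i))
  have hbound := hA.sq_mul_two_mul_card_sub_two_mul_apply_le hm.le ht hi
  rw [div_mul_eq_mul_div, le_div_iff₀ (by positivity)]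
  linarith [mul_nonneg (sub_nonneg.2 hN) hx]

theorem abs_apply_le_of_abs_mulVec_le (hA : IsDiagDominantBetween A m M) (hm : 0 < m)
    (hcard : 3 ≤ Fintype.card ι) {x : ι → 𝕜} {t : 𝕜} (ht : ∀ i, |(A *ᵥ x) i| ≤ t) (k : ι) :
    |x k| ≤ 5 * M / (m ^ 2 * Fintype.card ι) * t := by
  obtain ⟨i, -, hi⟩ := exists_max_image univ (|x ·|) ⟨k, mem_univ k⟩
  refine (hi k (mem_univ k)).trans ?_
  rcases abs_choice (x i) with h | h <;> simp only [h, mem_univ, true_imp_iff] at hi ⊢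
  · exact hA.apply_le_of_abs_mulVec_le hm hcard ht hi
  · exact hA.apply_le_of_abs_mulVec_le (x := -x) hm hcard (by simpa [mulVec_neg] using ht)
      (by simpa using hi)

theorem isUnit_det (hA : IsDiagDominantBetween A m M) (hm : 0 < m)
    (hcard : 3 ≤ Fintype.card ι) : IsUnit A.det := by
  rw [isUnit_iff_ne_zero]
  intro hdet
  obtain ⟨x, hx, hAx⟩ := exists_mulVec_eq_zero_iff.2 hdet
  refine hx (funext fun k => ?_)
  simpa using hA.abs_apply_le_of_abs_mulVec_le hm hcard (x := x) (t := 0) (by simp [hAx]) k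

theorem abs_inv_apply_le (hA : IsDiagDominantBetween A m M) (hm : 0 < m)
    (hcard : 3 ≤ Fintype.card ι) (k l : ι) :
    |A⁻¹ k l| ≤ 5 * M / (m ^ 2 * Fintype.card ι) := by
  have hcol (i : ι) : |(A *ᵥ A⁻¹.col l) i| ≤ 1 := by
    rw [mulVec_col_inv (hA.isUnit_det hm hcard), Pi.single_apply]
    split_ifs <;> simp
  simpa using hA.abs_apply_le_of_abs_mulVec_le hm hcard hcol k

theorem abs_sum_compl_image_mul_le (hA : IsDiagDominantBetween A m M) (hm : 0 ≤ m)
    {e : σ → ι} (he : Function.Injective e) {u : ι → 𝕜} {B : 𝕜}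
    (hu : ∀ k ∉ Set.range e, |u k| ≤ B) (i : σ) :
    |∑ k ∈ (univ.image e)ᶜ, A (e i) k * u k| ≤
      (Fintype.card ι - Fintype.card σ) * (M * B) := by
  have hcompl : ((univ.image e)ᶜ.card : 𝕜) = Fintype.card ι - Fintype.card σ := by
    rw [card_compl, card_image_of_injective _ he, card_univ,
      Nat.cast_sub (Fintype.card_le_of_injective e he)]
  rw [← hcompl, ← nsmul_eq_mul]
  refine (abs_sum_le_sum_abs _ _).trans (sum_le_card_nsmul _ _ _ fun k hk => ?_)
  have hk' : k ∉ Set.range e := by simpa using hk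
  have hne : e i ≠ k := fun h => hk' ⟨i, h⟩
  have hpos : 0 ≤ A (e i) k := hm.trans (hA.le_apply _ _ hne)
  rw [abs_mul, abs_of_nonneg hpos]
  exact mul_le_mul (hA.apply_le _ _ hne) (hu k hk') (abs_nonneg _)
    (hpos.trans (hA.apply_le _ _ hne))

theorem abs_sub_le_of_submatrix_mulVec_eq (hA : IsDiagDominantBetween A m M) (hm : 0 < m)
    {e : σ → ι} (he : Function.Injective e) (hcard : 3 ≤ Fintype.card σ)
    {u : ι → 𝕜} {y : σ → 𝕜} {B : 𝕜} (hu : ∀ k ∉ Set.range e, |u k| ≤ B)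
    (hy : A.submatrix e e *ᵥ y = (A *ᵥ u) ∘ e) (i : σ) :
    |u (e i) - y i| ≤ 5 * M / (m ^ 2 * Fintype.card σ) *
      ((Fintype.card ι - Fintype.card σ) * (M * B)) := by
  classical
  refine (hA.submatrix hm.le he).abs_apply_le_of_abs_mulVec_le hm hcard (x := u ∘ e - y)
    (fun l => ?_) i
  have hsplit : (A *ᵥ u) (e l) =
      (A.submatrix e e *ᵥ (u ∘ e)) l + ∑ k ∈ (univ.image e)ᶜ, A (e l) k * u k := by
    simp only [mulVec, dotProduct, submatrix_apply, Function.comp_apply]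
    rw [← sum_add_sum_compl (univ.image e), sum_image he.injOn]
  have hresidual : (A.submatrix e e *ᵥ (u ∘ e - y)) l =
      -∑ k ∈ (univ.image e)ᶜ, A (e l) k * u k := by
    rw [mulVec_sub, hy, Pi.sub_apply, Function.comp_apply, hsplit]
    ring
  rw [hresidual, abs_neg]
  exact hA.abs_sum_compl_image_mul_le hm.le he hu l

theorem abs_inv_apply_le_of_ne (hA : IsDiagDominantBetween A m M) (hm : 0 < m)
    (hcard : 4 ≤ Fintype.card ι) {k l : ι} (hkl : k ≠ l) :
    |A⁻¹ k l| ≤ 25 * M ^ 3 / (m ^ 4 * (Fintype.card ι * (Fintype.card ι - 1))) := by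
  have hsub : Fintype.card {i // i ≠ l} = Fintype.card ι - 1 := by
    simp [Fintype.card_subtype_compl]
  let e : {i // i ≠ l} → ι := Subtype.val
  have hhom : A.submatrix e e *ᵥ 0 = (A *ᵥ A⁻¹.col l) ∘ e := by
    rw [mulVec_col_inv (hA.isUnit_det hm (by lia)), mulVec_zero]
    ext i
    simp [e, i.2]
  have h := hA.abs_sub_le_of_submatrix_mulVec_eq hm Subtype.val_injective (by lia)
    (fun i _ => hA.abs_inv_apply_le hm (by lia) i l) hhom ⟨k, hkl⟩
  rw [hsub, Nat.cast_pred (by lia), Pi.zero_apply, sub_zero] at h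
  exact h.trans_eq (by field_simp; ring)

theorem abs_inv_apply_sub_inv_submatrix_apply_le [DecidableEq σ]
    (hA : IsDiagDominantBetween A m M) (hm : 0 < m) {e : σ → ι} (he : Function.Injective e)
    (hcard : 3 ≤ Fintype.card σ) (i j : σ) :
    |A⁻¹ (e i) (e j) - (A.submatrix e e)⁻¹ i j| ≤
      125 * M ^ 5 / m ^ 6 * ((Fintype.card ι - Fintype.card σ) /
        (Fintype.card ι * (Fintype.card ι - 1) * Fintype.card σ)) := by
  have hle : Fintype.card σ ≤ Fintype.card ι := Fintype.card_le_of_injective e he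
  have hdeleted (k : ι) (hk : k ∉ Set.range e) : |A⁻¹.col (e j) k| ≤
      25 * M ^ 3 / (m ^ 4 * (Fintype.card ι * (Fintype.card ι - 1))) := by
    have hlt : Fintype.card σ < Fintype.card ι :=
      Fintype.card_lt_of_injective_of_notMem e he hk
    exact hA.abs_inv_apply_le_of_ne hm (by lia) fun h => hk ⟨j, h.symm⟩
  have hcol : A.submatrix e e *ᵥ (A.submatrix e e)⁻¹.col j = (A *ᵥ A⁻¹.col (e j)) ∘ e := by
    rw [mulVec_col_inv ((hA.submatrix hm.le he).isUnit_det hm hcard),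
      mulVec_col_inv (hA.isUnit_det hm (by lia))]
    ext k
    simp [Pi.single_apply, he.eq_iff]
  exact (hA.abs_sub_le_of_submatrix_mulVec_eq hm he hcard hdeleted hcol i).trans_eq
    (by field_simp; ring)

end IsDiagDominantBetween

theorem sub_div_mul_sub_one_mul_le {𝕜 : Type*} [Field 𝕜] [LinearOrder 𝕜] [IsStrictOrderedRing 𝕜]
    {N n r : 𝕜} (hn : 2 ≤ n) (hnN : n ≤ N) (hNr : N ≤ n + r) :
    (N - n) / (N * (N - 1) * n) ≤ 2 * r * (r + 1) / N ^ 3 := by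
  have hr : 0 ≤ r := by linarith
  have hN : 0 < N := by linarith
  have hN₁ : 0 < N - 1 := by linarith
  have hden : 0 < N * (N - 1) * n := mul_pos (mul_pos hN hN₁) (by linarith)
  have hnum : N - n ≤ r := by linarith
  have hpred : N ≤ 2 * (N - 1) := by linarith
  have hcard : N ≤ (r + 1) * n := by nlinarith
  rw [div_le_div_iff₀ hden (pow_pos hN 3)]
  calc (N - n) * N ^ 3 = (N - n) * N * N * N := by ring
    _ ≤ r * (2 * (N - 1)) * ((r + 1) * n) * N := by gcongr
    _ = 2 * r * (r + 1) * (N * (N - 1) * n) := by ring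

theorem block_inverse_difference_bound_general {𝕜 ι σ : Type*} [Field 𝕜] [LinearOrder 𝕜]
    [IsStrictOrderedRing 𝕜] [Fintype ι] [DecidableEq ι] [Fintype σ] [DecidableEq σ]
    {A : Matrix ι ι 𝕜} {m M : 𝕜} (hA : IsDiagDominantBetween A m M) (hm : 0 < m)
    {e : σ → ι} (he : Function.Injective e) (hσ : 3 ≤ Fintype.card σ)
    {r : ℕ} (hr : Fintype.card ι ≤ Fintype.card σ + r) (i j : σ) :
    |((A⁻¹ - Matrix.diagonal fun k => 1 / A k k).submatrix e e) i j -
        ((A.submatrix e e)⁻¹ - Matrix.diagonal fun k => 1 / A (e k) (e k)) i j| ≤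
      250 * r * (r + 1) * M ^ 5 / (m ^ 6 * (Fintype.card ι : 𝕜) ^ 3) := by
  have hentry : ((A⁻¹ - Matrix.diagonal fun k => 1 / A k k).submatrix e e) i j -
      ((A.submatrix e e)⁻¹ - Matrix.diagonal fun k => 1 / A (e k) (e k)) i j =
      A⁻¹ (e i) (e j) - (A.submatrix e e)⁻¹ i j := by
    simp [Matrix.diagonal_apply, he.eq_iff]
  rw [hentry]
  refine (hA.abs_inv_apply_sub_inv_submatrix_apply_le hm he hσ i j).trans ?_
  have hle : Fintype.card σ ≤ Fintype.card ι := Fintype.card_le_of_injective e he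
  have hσ₂ : (2 : 𝕜) ≤ Fintype.card σ := by exact_mod_cast (by lia : 2 ≤ Fintype.card σ)
  have hr_cast : (Fintype.card ι : 𝕜) ≤ Fintype.card σ + r := by exact_mod_cast hr
  have : Nontrivial ι := Fintype.one_lt_card_iff_nontrivial.1 (by lia)
  have hM : 0 ≤ M := hm.le.trans hA.lower_le_upper
  calc 125 * M ^ 5 / m ^ 6 * ((Fintype.card ι - Fintype.card σ : 𝕜) /
        (Fintype.card ι * (Fintype.card ι - 1) * Fintype.card σ))
      ≤ 125 * M ^ 5 / m ^ 6 * (2 * r * (r + 1) / Fintype.card ι ^ 3) := by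
        refine mul_le_mul_of_nonneg_left ?_ (by positivity)
        exact sub_div_mul_sub_one_mul_le hσ₂ (Nat.cast_le.2 hle) hr_cast
    _ = 250 * r * (r + 1) * M ^ 5 / (m ^ 6 * (Fintype.card ι : 𝕜) ^ 3) := by
        field_simp
        ring

/-- **Paper's supplementary Lemma 10.** For a fixed positive integer `r` there is a constant
`C = C(r)` such that for every `n > r + 2`, every `0 < c ≤ b` and every `V ∈ L_n(1/b, 1/c)`,
writing `S = diag (1 / V i i)`, `W = V⁻¹ - S` with bottom-right `(n-r) × (n-r)` block `W₂₂`,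
and `W̃₂₂ = V₂₂⁻¹ - S₂₂`, one has `‖W₂₂ - W̃₂₂‖_max ≤ C b⁶ / (n³ c⁵)`, stated entrywise. -/
theorem block_inverse_difference_bound (r : ℕ) (hr : 0 < r) :
    ∃ C : ℝ, 0 < C ∧
      ∀ n : ℕ, r + 2 < n → ∀ b c : ℝ, 0 < c → c ≤ b →
        ∀ V : Matrix (Fin n) (Fin n) ℝ, V.IsSymm →
          (∀ i, V i i = ∑ j ∈ Finset.univ.erase i, V i j) →
          (∀ i j, i ≠ j → 1 / b ≤ V i j) →
          (∀ i j, i ≠ j → V i j ≤ 1 / c) →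
          ∀ e : Fin (n - r) → Fin n, (∀ i, (e i : ℕ) = r + (i : ℕ)) →
            ∀ i j,
              |((V⁻¹ - Matrix.diagonal fun k => 1 / V k k).submatrix e e) i j -
                  ((V.submatrix e e)⁻¹ - Matrix.diagonal fun k => 1 / V (e k) (e k)) i j| ≤
                C * b ^ 6 / ((n : ℝ) ^ 3 * c ^ 5) := by
  refine ⟨250 * r * (r + 1), by positivity, fun n hn b c hc hcb V _ hdiag hlow hupp e he i j => ?_⟩
  have hV : IsDiagDominantBetween V (1 / b) (1 / c) := ⟨hlow, hupp, fun i => (hdiag i).ge⟩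
  have hinj : Function.Injective e := fun x y hxy => by grind
  have hb : 0 < b := hc.trans_le hcb
  refine (block_inverse_difference_bound_general hV (one_div_pos.2 hb) hinj
    (by rw [Fintype.card_fin]; lia) (r := r) (by simp only [Fintype.card_fin]; lia) i j).trans_eq ?_
  rw [Fintype.card_fin]
  field_simp
end
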